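/- Fix k ≥ 1. For every Cayley tree T labelled with [n]_0, every vertex of T (including the root) has at most k children if and only if every value appears at most k times in its preference sequence π_T; hence the map T ↦ π_T restricts to a bijection between k-ary Cayley trees labelled with [n]_0 and parking functions of length n in which every symbol has multiplicity at most k. Similarly, every vertex of T is either a leaf or has exactly two children (T is a Catalan tree) if and only if every value of {1,…,n+1} appears either 0 or 2 times in π_T, giving a bijection between Catalan trees labelled with [n]_0 and parking functions of length n in which every symbol appears with multiplicity 0 or 2. -/

import Mathlib

/-!
Trees are recovered from their preference sequences by the parking tree: `pref n` and `ptParent n`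
are mutually inverse, because the priority-first search of a tree and the parking process of its
preference sequence are the same queue. For a tree `f`, the vertex `weary n f j` is, as a car with
preferences `pref n f`, parked at spot `j`; for a parking function `π`, the list of parked cars
`birdsEye n π` satisfies the greedy rule defining the search of `ptParent n π`. In both cases the
point is that the preference of `v` is at most `j` exactly when the parent of `v` is among the
first `j` vertices of the search, the root included.

Under this bijection the cars preferring spot `j + 1` are the children of `weary n f j`, so the
multiplicities of `pref n f` are the numbers of children of `f`, reindexed.
-/

open scoped Classical

namespace WearyParking

/-- `f` is the parent function of a Cayley tree on `{0,…,n}` rooted at `0`: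
`f 0 = 0`, `f` is pinned to `0` outside `{1,…,n}`, `f` maps `{1,…,n}` into `{0,…,n}`,
and every vertex reaches the root under iteration. -/
def IsCayleyTree (n : ℕ) (f : ℕ → ℕ) : Prop :=
  f 0 = 0 ∧ (∀ i, n < i → f i = 0) ∧
  (∀ i, 1 ≤ i → i ≤ n → f i ≤ n) ∧
  (∀ i, 1 ≤ i → i ≤ n → ∃ k, f^[k] i = 0)

/-- A non-root vertex `i` is a record of the tree if it is greater than
all of its ancestors. -/
def IsRecord (n : ℕ) (f : ℕ → ℕ) (i : ℕ) : Prop :=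
  1 ≤ i ∧ i ≤ n ∧ ∀ k, 1 ≤ k → f^[k] i < i

/-- The smallest record larger than `i`. -/
noncomputable def nextRecord (n : ℕ) (f : ℕ → ℕ) (i : ℕ) : ℕ :=
  sInf {j | IsRecord n f j ∧ i < j}

/-- The record (blob) code of the tree, a function on `{1,…,n-1}`:
at a non-record position it records the parent, and at a record position it
records the parent of the next record. -/
noncomputable def blob (n : ℕ) (f : ℕ → ℕ) (i : ℕ) : ℕ :=
  if IsRecord n f i then f (nextRecord n f i) else f i

/-- Number of children of vertex `v` in the tree. -/
def numChildren (n : ℕ) (f : ℕ → ℕ) (v : ℕ) : ℕ :=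
  ((Finset.Icc 1 n).filter fun i => f i = v).card

/-- The list of the first `i+1` vertices visited by the priority-first search:
start at the root `0`; at each step visit the smallest unvisited vertex whose
parent has been visited. -/
noncomputable def wearyList (n : ℕ) (f : ℕ → ℕ) : ℕ → List ℕ
  | 0 => [0]
  | (i + 1) =>
      wearyList n f i ++
        [sInf {v | 1 ≤ v ∧ v ≤ n ∧ v ∉ wearyList n f i ∧ f v ∈ wearyList n f i}]

/-- The weary permutation of the tree: `weary n f i` is the `i`-th vertex visited
by the priority-first search (with `weary n f 0 = 0`). -/
noncomputable def weary (n : ℕ) (f : ℕ → ℕ) (i : ℕ) : ℕ :=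
  (wearyList n f n).getD i 0

/-- The inverse of the weary permutation. -/
noncomputable def wearyInv (n : ℕ) (f : ℕ → ℕ) (v : ℕ) : ℕ :=
  sInf {i | weary n f i = v}

/-- The preference sequence `π_T` of the tree: `π_T i = ω_T⁻¹ (f_T i) + 1`. -/
noncomputable def pref (n : ℕ) (f : ℕ → ℕ) (i : ℕ) : ℕ :=
  wearyInv n f (f i) + 1

/-- Parent function of the priority tree `pt(T)`: `ω_T⁻¹ ∘ f_T ∘ ω_T`. -/
noncomputable def prioParent (n : ℕ) (f : ℕ → ℕ) (i : ℕ) : ℕ :=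
  wearyInv n f (f (weary n f i))

/-- The list of spots occupied by cars `1,…,c` in the classical parking process:
car `c` parks at the first spot `≥ π c` not occupied by an earlier car. -/
noncomputable def spotList (π : ℕ → ℕ) : ℕ → List ℕ
  | 0 => []
  | (c + 1) => spotList π c ++ [sInf {s | π (c + 1) ≤ s ∧ s ∉ spotList π c}]

/-- The spot where car `c` ends up in the classical parking process. -/
noncomputable def spot (π : ℕ → ℕ) (c : ℕ) : ℕ :=
  (spotList π c).getD (c - 1) 0

/-- `π` is a parking function of length `n`: preferences lie in `{1,…,n}`
(pinned to `1` outside `{1,…,n}`) and every car parks within the `n` spots. -/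
def IsParkingFun (n : ℕ) (π : ℕ → ℕ) : Prop :=
  (∀ c, 1 ≤ c → c ≤ n → 1 ≤ π c ∧ π c ≤ n) ∧
  (∀ c, c = 0 ∨ n < c → π c = 1) ∧
  (∀ c, 1 ≤ c → c ≤ n → spot π c ≤ n)

/-- The bird's-eye permutation `ω_π`: the car parked at spot `i` (and `0` at `0`). -/
noncomputable def birdsEye (n : ℕ) (π : ℕ → ℕ) (i : ℕ) : ℕ :=
  if i = 0 then 0 else sInf {c | 1 ≤ c ∧ c ≤ n ∧ spot π c = i}

/-- The inverse of the bird's-eye permutation. -/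
noncomputable def birdsEyeInv (n : ℕ) (π : ℕ → ℕ) (c : ℕ) : ℕ :=
  sInf {i | birdsEye n π i = c}

/-- Parent function of the parking tree `PT(π)`: `f_π i = ω_π (π i - 1)`. -/
noncomputable def ptParent (n : ℕ) (π : ℕ → ℕ) (i : ℕ) : ℕ :=
  if 1 ≤ i ∧ i ≤ n then birdsEye n π (π i - 1) else 0

/-- `v` is a record of the parking function `π`, i.e. a left-to-right maximum of
the word `ω_π(1) ω_π(2) ⋯ ω_π(n)`. -/
def IsPfRecord (n : ℕ) (π : ℕ → ℕ) (v : ℕ) : Prop :=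
  ∃ i, 1 ≤ i ∧ i ≤ n ∧ birdsEye n π i = v ∧ ∀ j, 1 ≤ j → j < i → birdsEye n π j < v

/-- The waiting time of the tree: `wait T = Σ_{i=1}^n (i - f_{pt(T)}(i))`. -/
noncomputable def wait (n : ℕ) (f : ℕ → ℕ) : ℕ :=
  ∑ i ∈ Finset.Icc 1 n, (i - prioParent n f i)

/-- The number of priority small ascents of the tree. -/
noncomputable def psa (n : ℕ) (f : ℕ → ℕ) : ℕ :=
  ((Finset.Icc 1 n).filter fun i => prioParent n f i = i - 1).card

/-- The number of children of the root. -/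
def degRoot (n : ℕ) (f : ℕ → ℕ) : ℕ := numChildren n f 0

/-- The children sequence: `chseq n f j` is the number of vertices with exactly
`j` children. -/
def chseq (n : ℕ) (f : ℕ → ℕ) (j : ℕ) : ℕ :=
  ((Finset.Icc 0 n).filter fun v => numChildren n f v = j).card

/-- The number of probes of the parking function: `n` plus the total displacement. -/
noncomputable def probes (n : ℕ) (π : ℕ → ℕ) : ℕ :=
  n + ∑ c ∈ Finset.Icc 1 n, (spot π c - π c)

/-- The number of lucky cars of `π`: cars parking at their preferred spot. -/
noncomputable def lucky (n : ℕ) (π : ℕ → ℕ) : ℕ :=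
  ((Finset.Icc 1 n).filter fun c => spot π c = π c).card

/-- The number of `1`s in `π`. -/
def ones (n : ℕ) (π : ℕ → ℕ) : ℕ :=
  ((Finset.Icc 1 n).filter fun c => π c = 1).card

/-- The multiplicity of the value `v` in the parking function `π`. -/
def multIn (n : ℕ) (π : ℕ → ℕ) (v : ℕ) : ℕ :=
  ((Finset.Icc 1 n).filter fun c => π c = v).card

/-- The multiplicity sequence: `multSeq n π j` is the number of values in
`{1,…,n+1}` appearing exactly `j` times in `π`. -/
def multSeq (n : ℕ) (π : ℕ → ℕ) (j : ℕ) : ℕ :=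
  ((Finset.Icc 1 (n + 1)).filter fun v => multIn n π v = j).card

/-- The tree is a path graph with endpoints `0` and `n`: every vertex has at most
one child and `n` is the (unique) leaf. -/
def IsPathTree (n : ℕ) (f : ℕ → ℕ) : Prop :=
  (∀ v, v ≤ n → numChildren n f v ≤ 1) ∧ numChildren n f n = 0

/-- `g` is the parent map of a rooted forest on `{1,…,n}` rooted at `{1,…,k}`:
the vertices `1,…,k` are roots (fixed points), every other vertex of `{1,…,n}` has a
parent in `{1,…,n}`, every vertex reaches one of the roots under iteration, and `g`
is pinned to `0` outside `{1,…,n}`. -/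
def IsForestRootedAt (n k : ℕ) (g : ℕ → ℕ) : Prop :=
  (∀ i, 1 ≤ i → i ≤ k → g i = i) ∧
  (∀ i, k < i → i ≤ n → 1 ≤ g i ∧ g i ≤ n) ∧
  (∀ i, 1 ≤ i → i ≤ n → ∃ m, 1 ≤ g^[m] i ∧ g^[m] i ≤ k) ∧
  (∀ i, i = 0 ∨ n < i → g i = 0)

section

open Set

lemma injOn_of_lt_imp_ne {α β : Type*} [LinearOrder α] {g : α → β} {s : Set α}
    (h : ∀ i ∈ s, ∀ j ∈ s, i < j → g i ≠ g j) : InjOn g s := by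
  intro i hi j hj hij
  rcases lt_trichotomy i j with hlt | heq | hgt
  · exact absurd hij (h i hi j hj hlt)
  · exact heq
  · exact absurd hij.symm (h j hj i hi hgt)

lemma bijOn_setOf_and {α β : Type*} {g : α → β} {P P' : α → Prop} {Q Q' : β → Prop}
    (h : BijOn g {a | P a} {b | Q b}) (hiff : ∀ a, P a → (P' a ↔ Q' (g a))) :
    BijOn g {a | P a ∧ P' a} {b | Q b ∧ Q' b} := by
  refine ⟨fun a ha => ⟨h.mapsTo ha.1, (hiff a ha.1).1 ha.2⟩,
    h.injOn.mono fun a ha => ha.1, fun b hb => ?_⟩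
  obtain ⟨a, ha, rfl⟩ := h.surjOn hb.1
  exact ⟨a, ⟨ha, (hiff a ha).2 hb.2⟩, rfl⟩

lemma eq_append_map_range_of_succ {α : Type*} {L : ℕ → List α} {a : ℕ → α}
    (h : ∀ i, L (i + 1) = L i ++ [a i]) (i : ℕ) : L i = L 0 ++ (List.range i).map a := by
  induction i with
  | zero => simp
  | succ i ih => rw [h, ih, List.range_succ, List.map_append, List.append_assoc, List.map_singleton]

/-! ### The parking process -/

section Parking

variable {n : ℕ} {π : ℕ → ℕ}

lemma spot_succ (π : ℕ → ℕ) (c : ℕ) :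
    spot π (c + 1) = sInf {s | π (c + 1) ≤ s ∧ s ∉ spotList π c} := by
  have hlength : (spotList π c).length = c := by
    rw [eq_append_map_range_of_succ (L := spotList π) (fun _ => rfl) c]
    simp [spotList]
  simp [spot, spotList, hlength]

lemma spotList_eq_map (π : ℕ → ℕ) (c : ℕ) : spotList π c = (List.range' 1 c).map (spot π) := by
  induction c with
  | zero => rfl
  | succ c ih =>
    rw [List.range'_1_concat, List.map_append, ← ih, List.map_singleton, add_comm 1 c, spot_succ,
      spotList]

lemma mem_spotList {c s : ℕ} : s ∈ spotList π c ↔ s ∈ spot π '' Ico 1 (c + 1) := by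
  simp only [spotList_eq_map, List.mem_map, List.mem_range'_1, add_comm 1 c, mem_image, mem_Ico]

lemma isLeast_spot {c : ℕ} (hc : 1 ≤ c) :
    IsLeast {s | π c ≤ s ∧ s ∉ spot π '' Ico 1 c} (spot π c) := by
  obtain ⟨c, rfl⟩ := Nat.exists_eq_add_of_le' hc
  simp only [← mem_spotList, spot_succ π c]
  have hfree : {s | π (c + 1) ≤ s ∧ s ∉ spotList π c}.Nonempty :=
    ((Ici_infinite (π (c + 1))).sdiff (spotList π c).finite_toSet).nonempty
  exact isLeast_csInf hfree

lemma le_spot {c : ℕ} (hc : 1 ≤ c) : π c ≤ spot π c := (isLeast_spot hc).1.1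

lemma injOn_spot : InjOn (spot π) (Ici 1) :=
  injOn_of_lt_imp_ne fun i hi _ hj hij h => (isLeast_spot hj).1.2 ⟨i, ⟨hi, hij⟩, h⟩

lemma birdsEye_zero (n : ℕ) (π : ℕ → ℕ) : birdsEye n π 0 = 0 := if_pos rfl

lemma birdsEye_spot {c : ℕ} (hc : c ∈ Icc 1 n) (h0 : spot π c ≠ 0) :
    birdsEye n π (spot π c) = c := by
  have hset : {d | 1 ≤ d ∧ d ≤ n ∧ spot π d = spot π c} = {c} := by
    ext d
    exact ⟨fun hd => injOn_spot hd.1 hc.1 hd.2.2, by rintro rfl; exact ⟨hc.1, hc.2, rfl⟩⟩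
  rw [birdsEye, if_neg h0, hset, csInf_singleton]

lemma IsParkingFun.spot_mem (h : IsParkingFun n π) {c : ℕ} (hc : c ∈ Icc 1 n) :
    spot π c ∈ Icc 1 n :=
  ⟨(h.1 c hc.1 hc.2).1.trans (le_spot hc.1), h.2.2 c hc.1 hc.2⟩

lemma IsParkingFun.bijOn_spot (h : IsParkingFun n π) : BijOn (spot π) (Icc 1 n) (Icc 1 n) :=
  ((finite_Icc 1 n).injOn_iff_bijOn_of_mapsTo fun _ => h.spot_mem).1
    (injOn_spot.mono Icc_subset_Ici_self)

lemma IsParkingFun.invOn_birdsEye (h : IsParkingFun n π) :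
    InvOn (birdsEye n π) (spot π) (Icc 1 n) (Icc 1 n) := by
  have hleft : LeftInvOn (birdsEye n π) (spot π) (Icc 1 n) := fun c hc =>
    birdsEye_spot hc (Nat.one_le_iff_ne_zero.1 (h.spot_mem hc).1)
  exact ⟨hleft, h.bijOn_spot.image_eq ▸ hleft.rightInvOn_image⟩

lemma IsParkingFun.bijOn_birdsEye (h : IsParkingFun n π) :
    BijOn (birdsEye n π) (Icc 1 n) (Icc 1 n) :=
  h.bijOn_spot.symm h.invOn_birdsEye.symm

lemma IsParkingFun.bijOn_birdsEye_Iic (h : IsParkingFun n π) :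
    BijOn (birdsEye n π) (Iic n) (Iic n) := by
  have hIic : Iic n = insert 0 (Icc 1 n) := by
    ext j
    simp only [mem_Iic, mem_insert_iff, mem_Icc]
    omega
  have hinsert := h.bijOn_birdsEye.insert (a := 0) (by simp [birdsEye_zero])
  rwa [birdsEye_zero, ← hIic] at hinsert

lemma IsParkingFun.multIn_eq_zero (h : IsParkingFun n π) {x : ℕ} (hx : x ∉ Icc 1 n) :
    multIn n π x = 0 := by
  rw [multIn, Finset.card_eq_zero, Finset.filter_eq_empty_iff]
  rintro c hc rfl
  rw [Finset.mem_Icc] at hc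
  exact hx (h.1 c hc.1 hc.2)

end Parking

/-! ### Priority-first search -/

section Search

variable {n : ℕ} {f : ℕ → ℕ}

/-- The frontier of a set `S` of visited vertices: the non-root vertices that are unvisited and
have a visited parent. Priority-first search visits the smallest of them next. -/
def frontier (n : ℕ) (f : ℕ → ℕ) (S : Set ℕ) : Set ℕ :=
  {v | 1 ≤ v ∧ v ≤ n ∧ v ∉ S ∧ f v ∈ S}

lemma wearyList_eq_append (n : ℕ) (f : ℕ → ℕ) (i : ℕ) :
    wearyList n f i =
      [0] ++ (List.range i).map fun j => sInf (frontier n f {v | v ∈ wearyList n f j}) :=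
  eq_append_map_range_of_succ (L := wearyList n f) (fun _ => rfl) i

lemma weary_zero (n : ℕ) (f : ℕ → ℕ) : weary n f 0 = 0 := by
  rw [weary, wearyList_eq_append, List.singleton_append, List.getD_cons_zero]

lemma weary_succ (f : ℕ → ℕ) {i : ℕ} (hi : i < n) :
    weary n f (i + 1) = sInf (frontier n f {v | v ∈ wearyList n f i}) := by
  rw [weary, wearyList_eq_append, List.singleton_append, List.getD_cons_succ,
    List.getD_eq_getElem _ _ (by simpa using hi), List.getElem_map, List.getElem_range]

lemma wearyList_eq_map (f : ℕ → ℕ) {i : ℕ} (hi : i ≤ n) :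
    wearyList n f i = (List.range (i + 1)).map (weary n f) := by
  induction i with
  | zero => simp [wearyList, weary_zero]
  | succ i ih =>
    rw [List.range_succ, List.map_append, ← ih (Nat.le_of_succ_le hi), List.map_singleton,
      weary_succ f hi]
    rfl

lemma weary_eq_sInf_frontier (f : ℕ → ℕ) {j : ℕ} (hj : j ∈ Icc 1 n) :
    weary n f j = sInf (frontier n f (weary n f '' Iio j)) := by
  obtain ⟨i, rfl⟩ := Nat.exists_eq_add_of_le' hj.1
  have hvisited : {v | v ∈ wearyList n f i} = weary n f '' Iio (i + 1) := by
    ext v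
    simp only [wearyList_eq_map f (Nat.le_of_succ_le hj.2), mem_ofPred_eq, List.mem_map,
      List.mem_range, mem_image, mem_Iio]
  rw [weary_succ f hj.2, hvisited]

lemma eqOn_weary_of_isLeast {W : ℕ → ℕ} (h0 : W 0 = 0)
    (h : ∀ j ∈ Icc 1 n, IsLeast (frontier n f (W '' Iio j)) (W j)) :
    EqOn W (weary n f) (Iic n) := by
  intro j hj
  induction j using Nat.strong_induction_on with
  | _ j ih =>
    rcases Nat.eq_zero_or_pos j with rfl | hpos
    · rw [h0, weary_zero]
    · have himage : W '' Iio j = weary n f '' Iio j :=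
        image_congr fun i hi => ih i hi (mem_Iic.2 ((mem_Iio.1 hi).le.trans hj))
      rw [weary_eq_sInf_frontier f ⟨hpos, hj⟩, ← himage, (h j ⟨hpos, hj⟩).csInf_eq]

lemma IsCayleyTree.parent_le (hf : IsCayleyTree n f) (v : ℕ) : f v ≤ n := by
  rcases Nat.eq_zero_or_pos v with rfl | hpos
  · simp [hf.1]
  · rcases le_or_gt v n with hle | hgt
    · exact hf.2.2.1 v hpos hle
    · simp [hf.2.1 v hgt]

lemma IsCayleyTree.frontier_nonempty (hf : IsCayleyTree n f) {S : Set ℕ} (h0 : 0 ∈ S)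
    (hS : ¬ Iic n ⊆ S) : (frontier n f S).Nonempty := by
  by_contra hempty
  have hclosed : ∀ v ≤ n, f v ∈ S → v ∈ S := by
    intro v hv hfv
    by_contra hvS
    have hpos : 1 ≤ v := Nat.one_le_iff_ne_zero.2 fun h => hvS (h ▸ h0)
    exact hempty ⟨v, hpos, hv, hvS, hfv⟩
  have hback : ∀ m, ∀ v ≤ n, f^[m] v ∈ S → v ∈ S := by
    intro m
    induction m with
    | zero => exact fun v _ h => h
    | succ m ih => exact fun v hv h => hclosed v hv (ih _ (hf.parent_le v) h)
  refine hS fun v hv => ?_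
  rcases Nat.eq_zero_or_pos v with rfl | hpos
  · exact h0
  · obtain ⟨m, hm⟩ := hf.2.2.2 v hpos hv
    exact hback m v hv (hm ▸ h0)

lemma IsCayleyTree.isLeast_weary (hf : IsCayleyTree n f) {j : ℕ} (hj : j ∈ Icc 1 n) :
    IsLeast (frontier n f (weary n f '' Iio j)) (weary n f j) := by
  rw [weary_eq_sInf_frontier f hj]
  have hnot : ¬ Iic n ⊆ weary n f '' Iio j := fun hsub => by
    have hcard := (ncard_le_ncard hsub ((finite_Iio j).image _)).trans
      (ncard_image_le (finite_Iio j))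
    simp only [ncard_Iic_nat, ncard_Iio_nat] at hcard
    have := hj.2
    omega
  exact isLeast_csInf (hf.frontier_nonempty ⟨0, hj.1, weary_zero n f⟩ hnot)

lemma IsCayleyTree.bijOn_weary (hf : IsCayleyTree n f) :
    BijOn (weary n f) (Iic n) (Iic n) := by
  have hmaps : MapsTo (weary n f) (Iic n) (Iic n) := by
    intro j hj
    rcases Nat.eq_zero_or_pos j with rfl | hpos
    · simp [weary_zero]
    · exact (hf.isLeast_weary ⟨hpos, hj⟩).1.2.1
  refine ((finite_Iic n).injOn_iff_bijOn_of_mapsTo hmaps).1 (injOn_of_lt_imp_ne ?_)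
  intro i _ j hj hij h
  exact (hf.isLeast_weary ⟨Nat.one_le_of_lt hij, hj⟩).1.2.2.1 ⟨i, hij, h⟩

lemma IsCayleyTree.exists_weary_eq (hf : IsCayleyTree n f) {v : ℕ} (hv : v ∈ Icc 1 n) :
    ∃ j ∈ Icc 1 n, weary n f j = v := by
  obtain ⟨j, hj, rfl⟩ := hf.bijOn_weary.surjOn hv.2
  refine ⟨j, ⟨Nat.one_le_iff_ne_zero.2 ?_, hj⟩, rfl⟩
  rintro rfl
  exact absurd hv.1 (by simp [weary_zero])

lemma IsCayleyTree.invOn_wearyInv (hf : IsCayleyTree n f) :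
    InvOn (wearyInv n f) (weary n f) (Iic n) (Iic n) := by
  have hleft : LeftInvOn (wearyInv n f) (weary n f) (Iic n) := by
    intro j hj
    have hle : wearyInv n f (weary n f j) ≤ j :=
      Nat.sInf_le (s := {i | weary n f i = weary n f j}) rfl
    exact hf.bijOn_weary.injOn (hle.trans hj) hj
      (Nat.sInf_mem (s := {i | weary n f i = weary n f j}) ⟨j, rfl⟩)
  exact ⟨hleft, hf.bijOn_weary.image_eq ▸ hleft.rightInvOn_image⟩

end Search

/-! ### The preference sequence of a tree -/

section Preference

variable {n : ℕ} {f : ℕ → ℕ}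

lemma IsCayleyTree.weary_pref_sub_one (hf : IsCayleyTree n f) (v : ℕ) :
    weary n f (pref n f v - 1) = f v := by
  rw [pref, Nat.add_sub_cancel, hf.invOn_wearyInv.2 (hf.parent_le v)]

lemma one_le_pref (n : ℕ) (f : ℕ → ℕ) (v : ℕ) : 1 ≤ pref n f v := Nat.le_add_left 1 _

lemma IsCayleyTree.pref_le_iff (hf : IsCayleyTree n f) {v j : ℕ} :
    pref n f v ≤ j ↔ f v ∈ weary n f '' Iio j := by
  rw [pref, Nat.succ_le_iff]
  refine ⟨fun h => ⟨_, h, hf.invOn_wearyInv.2 (hf.parent_le v)⟩, ?_⟩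
  rintro ⟨i, hij, hi⟩
  exact (Nat.sInf_le (s := {i | weary n f i = f v}) hi).trans_lt hij

lemma IsCayleyTree.pref_weary_le (hf : IsCayleyTree n f) {j : ℕ} (hj : j ∈ Icc 1 n) :
    pref n f (weary n f j) ≤ j :=
  hf.pref_le_iff.2 (hf.isLeast_weary hj).1.2.2.2

lemma IsCayleyTree.pref_mem (hf : IsCayleyTree n f) {v : ℕ} (hv : v ∈ Icc 1 n) :
    pref n f v ∈ Icc 1 n := by
  obtain ⟨j, hj, rfl⟩ := hf.exists_weary_eq hv
  exact ⟨one_le_pref n f _, (hf.pref_weary_le hj).trans hj.2⟩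

/-- By induction on the car: a spot between its preference and `j` went to a smaller vertex, as the
search preferred that vertex, so it is occupied when the car arrives. -/
lemma IsCayleyTree.spot_pref_weary (hf : IsCayleyTree n f) {j : ℕ} (hj : j ∈ Icc 1 n) :
    spot (pref n f) (weary n f j) = j := by
  induction hc : weary n f j using Nat.strong_induction_on generalizing j with
  | _ c ih =>
    subst hc
    have hleast := hf.isLeast_weary hj
    refine (isLeast_spot hleast.1.1).unique ⟨⟨hf.pref_weary_le hj, ?_⟩, ?_⟩
    · rintro ⟨d, ⟨hd1, hdj⟩, hd⟩
      obtain ⟨i, hi, rfl⟩ := hf.exists_weary_eq ⟨hd1, hdj.le.trans hleast.1.2.1⟩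
      rw [ih _ hdj hi rfl] at hd
      exact hdj.ne (congrArg _ hd)
    · rintro s ⟨hs, hfree⟩
      by_contra! hsj
      have hsmem : s ∈ Icc 1 n := ⟨(one_le_pref n f _).trans hs, hsj.le.trans hj.2⟩
      have hready : weary n f j ∈ frontier n f (weary n f '' Iio s) :=
        ⟨hleast.1.1, hleast.1.2.1, fun h => hleast.1.2.2.1 (image_mono (Iio_subset_Iio hsj.le) h),
          hf.pref_le_iff.1 hs⟩
      have hlt : weary n f s < weary n f j :=
        lt_of_le_of_ne ((hf.isLeast_weary hsmem).2 hready)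
          fun h => hsj.ne (hf.bijOn_weary.injOn hsmem.2 hj.2 h)
      exact hfree ⟨_, ⟨(hf.isLeast_weary hsmem).1.1, hlt⟩, ih _ hlt hsmem rfl⟩

lemma IsCayleyTree.isParkingFun_pref (hf : IsCayleyTree n f) : IsParkingFun n (pref n f) := by
  refine ⟨fun c h1 hn => hf.pref_mem ⟨h1, hn⟩, fun c hc => ?_, fun c h1 hn => ?_⟩
  · have hroot : f c = 0 := by
      rcases hc with rfl | hgt
      · exact hf.1
      · exact hf.2.1 c hgt
    have hinv : wearyInv n f (weary n f 0) = 0 := hf.invOn_wearyInv.1 (Nat.zero_le n)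
    rw [pref, hroot, ← weary_zero n f, hinv]
  · obtain ⟨j, hj, rfl⟩ := hf.exists_weary_eq ⟨h1, hn⟩
    exact (hf.spot_pref_weary hj).trans_le hj.2

lemma IsCayleyTree.eqOn_birdsEye_pref_weary (hf : IsCayleyTree n f) :
    EqOn (birdsEye n (pref n f)) (weary n f) (Iic n) := by
  intro j hj
  rcases Nat.eq_zero_or_pos j with rfl | hpos
  · rw [birdsEye_zero, weary_zero]
  · have hmem := (hf.isLeast_weary ⟨hpos, hj⟩).1
    have hspot := hf.spot_pref_weary ⟨hpos, hj⟩
    have hinv := birdsEye_spot (π := pref n f) ⟨hmem.1, hmem.2.1⟩ (hspot.trans_ne hpos.ne')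
    rwa [hspot] at hinv

lemma IsCayleyTree.ptParent_pref (hf : IsCayleyTree n f) : ptParent n (pref n f) = f := by
  funext v
  by_cases hv : 1 ≤ v ∧ v ≤ n
  · have hle : pref n f v - 1 ≤ n := (Nat.sub_le _ 1).trans (hf.pref_mem hv).2
    rw [ptParent, if_pos hv, hf.eqOn_birdsEye_pref_weary hle, hf.weary_pref_sub_one]
  · rw [ptParent, if_neg hv]
    rcases (by omega : v = 0 ∨ n < v) with rfl | hgt
    · exact hf.1.symm
    · exact (hf.2.1 v hgt).symm

lemma IsCayleyTree.multIn_pref_succ (hf : IsCayleyTree n f) {j : ℕ} (hj : j ≤ n) :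
    multIn n (pref n f) (j + 1) = numChildren n f (weary n f j) := by
  have hiff (c : ℕ) : pref n f c = j + 1 ↔ f c = weary n f j := by
    rw [pref, Nat.add_right_cancel_iff]
    constructor
    · rintro rfl
      exact (hf.invOn_wearyInv.2 (hf.parent_le c)).symm
    · intro h
      rw [h, hf.invOn_wearyInv.1 hj]
  simp only [multIn, numChildren, hiff]

lemma IsCayleyTree.forall_numChildren_iff (hf : IsCayleyTree n f) (P : ℕ → Prop) :
    (∀ v, v ≤ n → P (numChildren n f v)) ↔
      ∀ x, 1 ≤ x → x ≤ n + 1 → P (multIn n (pref n f) x) := by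
  refine (hf.bijOn_weary.forall (p := fun v => P (numChildren n f v))).trans
    ⟨fun h x h1 hx => ?_, fun h j hj => ?_⟩
  · obtain ⟨j, rfl⟩ := Nat.exists_eq_add_of_le' h1
    rw [hf.multIn_pref_succ (Nat.le_of_succ_le_succ hx)]
    exact h j (Nat.le_of_succ_le_succ hx)
  · rw [← hf.multIn_pref_succ hj]
    exact h (j + 1) (Nat.le_add_left 1 j) (Nat.succ_le_succ hj)

lemma IsCayleyTree.forall_numChildren_iff_of_zero (hf : IsCayleyTree n f) {P : ℕ → Prop}
    (h0 : P 0) :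
    (∀ v, v ≤ n → P (numChildren n f v)) ↔ ∀ x, P (multIn n (pref n f) x) := by
  rw [hf.forall_numChildren_iff]
  refine ⟨fun h x => ?_, fun h x _ _ => h x⟩
  by_cases hx : x ∈ Icc 1 n
  · exact h x hx.1 (Nat.le_succ_of_le hx.2)
  · rwa [hf.isParkingFun_pref.multIn_eq_zero hx]

end Preference

/-! ### The parking tree -/

section ParkingTree

variable {n : ℕ} {π : ℕ → ℕ}

lemma ptParent_of_mem {v : ℕ} (hv : v ∈ Icc 1 n) : ptParent n π v = birdsEye n π (π v - 1) :=
  if_pos hv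

lemma IsParkingFun.apply_birdsEye_le (h : IsParkingFun n π) {j : ℕ} (hj : j ∈ Icc 1 n) :
    π (birdsEye n π j) ≤ j := by
  have hle := le_spot (π := π) (h.bijOn_birdsEye.mapsTo hj).1
  rwa [h.invOn_birdsEye.2 hj] at hle

/-- The parent of the car parked at spot `j` is parked at an earlier spot. -/
lemma IsParkingFun.isCayleyTree_ptParent (h : IsParkingFun n π) :
    IsCayleyTree n (ptParent n π) := by
  have hreach : ∀ j ≤ n, ∃ m, (ptParent n π)^[m] (birdsEye n π j) = 0 := by
    intro j
    induction j using Nat.strong_induction_on with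
    | _ j ih =>
      intro hj
      rcases Nat.eq_zero_or_pos j with rfl | hpos
      · exact ⟨0, birdsEye_zero n π⟩
      · have hmem := h.bijOn_birdsEye.mapsTo ⟨hpos, hj⟩
        have hle := h.apply_birdsEye_le ⟨hpos, hj⟩
        obtain ⟨m, hm⟩ := ih (π (birdsEye n π j) - 1) (by omega) (by omega)
        exact ⟨m + 1, by rwa [Function.iterate_succ_apply, ptParent_of_mem hmem]⟩
  refine ⟨if_neg (by omega), fun v hv => if_neg (by omega), fun v h1 hn => ?_, fun v h1 hn => ?_⟩
  · rw [ptParent_of_mem ⟨h1, hn⟩]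
    exact h.bijOn_birdsEye_Iic.mapsTo ((Nat.sub_le _ 1).trans (h.1 v h1 hn).2)
  · obtain ⟨j, hj, rfl⟩ := h.bijOn_birdsEye.surjOn ⟨h1, hn⟩
    exact hreach j hj.2

lemma IsParkingFun.ptParent_mem_image_iff (h : IsParkingFun n π) {v j : ℕ} (hv : v ∈ Icc 1 n)
    (hj : j ≤ n + 1) : ptParent n π v ∈ birdsEye n π '' Iio j ↔ π v ≤ j := by
  have hπ := h.1 v hv.1 hv.2
  rw [ptParent_of_mem hv]
  constructor
  · rintro ⟨i, hij, hi⟩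
    rw [mem_Iio] at hij
    have heq : i = π v - 1 := h.bijOn_birdsEye_Iic.injOn (show i ≤ n by omega)
      (show π v - 1 ≤ n by omega) hi
    omega
  · exact fun hle => ⟨π v - 1, show π v - 1 < j by omega, rfl⟩

/-- A frontier vertex smaller than the car parked at spot `j` would find spot `j` free on arrival
and park there or earlier, contradicting that it is unvisited. -/
lemma IsParkingFun.isLeast_birdsEye (h : IsParkingFun n π) {j : ℕ} (hj : j ∈ Icc 1 n) :
    IsLeast (frontier n (ptParent n π) (birdsEye n π '' Iio j)) (birdsEye n π j) := by
  have hmem := h.bijOn_birdsEye.mapsTo hj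
  have hj' : j ≤ n + 1 := Nat.le_succ_of_le hj.2
  constructor
  · refine ⟨hmem.1, hmem.2, ?_, (h.ptParent_mem_image_iff hmem hj').2 (h.apply_birdsEye_le hj)⟩
    rintro ⟨i, hij, hi⟩
    exact hij.ne (h.bijOn_birdsEye_Iic.injOn (hij.le.trans hj.2) hj.2 hi)
  · rintro v ⟨h1, hn, hunvisited, hparent⟩
    have hv : v ∈ Icc 1 n := ⟨h1, hn⟩
    have hinv : birdsEye n π (spot π v) = v := h.invOn_birdsEye.1 hv
    by_contra! hlt
    have hfree : j ∉ spot π '' Ico 1 v := by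
      rintro ⟨d, ⟨hd1, hdv⟩, rfl⟩
      rw [h.invOn_birdsEye.1 ⟨hd1, hdv.le.trans hn⟩] at hlt
      exact lt_asymm hdv hlt
    have hle : spot π v ≤ j :=
      (isLeast_spot h1).2 ⟨(h.ptParent_mem_image_iff hv hj').1 hparent, hfree⟩
    rcases hle.lt_or_eq with hspot | hspot
    · exact hunvisited ⟨_, hspot, hinv⟩
    · exact hlt.ne (hspot ▸ hinv.symm)

lemma IsParkingFun.eqOn_birdsEye_weary_ptParent (h : IsParkingFun n π) :
    EqOn (birdsEye n π) (weary n (ptParent n π)) (Iic n) :=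
  eqOn_weary_of_isLeast (birdsEye_zero n π) fun _ => h.isLeast_birdsEye

lemma IsParkingFun.pref_ptParent (h : IsParkingFun n π) : pref n (ptParent n π) = π := by
  have hf := h.isCayleyTree_ptParent
  funext v
  by_cases hv : 1 ≤ v ∧ v ≤ n
  · have hπ := h.1 v hv.1 hv.2
    have hle : π v - 1 ≤ n := (Nat.sub_le _ 1).trans hπ.2
    rw [pref, ptParent_of_mem hv, h.eqOn_birdsEye_weary_ptParent hle, hf.invOn_wearyInv.1 hle,
      Nat.sub_add_cancel hπ.1]
  · rw [hf.isParkingFun_pref.2.1 v (by omega), h.2.1 v (by omega)]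

lemma bijOn_pref (n : ℕ) : BijOn (pref n) {f | IsCayleyTree n f} {π | IsParkingFun n π} :=
  InvOn.bijOn (f' := ptParent n) ⟨fun _ hf => hf.ptParent_pref, fun _ h => h.pref_ptParent⟩
    (fun _ hf => hf.isParkingFun_pref) fun _ h => h.isCayleyTree_ptParent

end ParkingTree

end

/-- A Cayley tree is `k`-ary iff every value has multiplicity at
most `k` in its preference sequence, giving a bijection between `k`-ary trees and
parking functions with all multiplicities `≤ k`; and a Cayley tree is a Catalan tree
(every vertex a leaf or with exactly two children) iff every value of `{1,…,n+1}`
appears `0` or `2` times in its preference sequence, giving a bijection between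
Catalan trees and parking functions with all multiplicities `0` or `2`. -/
theorem stmt19 (n k : ℕ) (hk : 1 ≤ k) :
    (∀ f : ℕ → ℕ, IsCayleyTree n f →
      ((∀ v, v ≤ n → numChildren n f v ≤ k) ↔ (∀ x, multIn n (pref n f) x ≤ k))) ∧
    Set.BijOn (fun f => pref n f)
      {f : ℕ → ℕ | IsCayleyTree n f ∧ ∀ v, v ≤ n → numChildren n f v ≤ k}
      {π : ℕ → ℕ | IsParkingFun n π ∧ ∀ x, multIn n π x ≤ k} ∧
    (∀ f : ℕ → ℕ, IsCayleyTree n f →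
      ((∀ v, v ≤ n → numChildren n f v = 0 ∨ numChildren n f v = 2) ↔
        (∀ x, 1 ≤ x → x ≤ n + 1 →
          multIn n (pref n f) x = 0 ∨ multIn n (pref n f) x = 2))) ∧
    Set.BijOn (fun f => pref n f)
      {f : ℕ → ℕ | IsCayleyTree n f ∧
        ∀ v, v ≤ n → numChildren n f v = 0 ∨ numChildren n f v = 2}
      {π : ℕ → ℕ | IsParkingFun n π ∧
        ∀ x, 1 ≤ x → x ≤ n + 1 → multIn n π x = 0 ∨ multIn n π x = 2} := by
  have hkary (f : ℕ → ℕ) (hf : IsCayleyTree n f) :=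
    hf.forall_numChildren_iff_of_zero (P := (· ≤ k)) (Nat.zero_le k)
  have hcatalan (f : ℕ → ℕ) (hf : IsCayleyTree n f) :=
    hf.forall_numChildren_iff fun m => m = 0 ∨ m = 2
  exact ⟨hkary, bijOn_setOf_and (bijOn_pref n) hkary,
    hcatalan, bijOn_setOf_and (bijOn_pref n) hcatalan⟩

end WearyParking
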